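/- Let 0 ≤ μ < 1, δ = (1−μ)/2, p = N^{−μ−δ}, and let F be a field of characteristic zero. Let P ∈ F[X_1,…,X_N] be of degree n with P = ∑_{i=1}^{T} α_i ∏_{j=1}^{d} Q_{ij} where each Q_{ij} depends on at most N^μ variables. Let m, r, s be positive integers satisfying m + r·s ≤ N/2, and let M be any set of multilinear monomials of degree exactly r. If T·d ≤ N^{s·δ/4}, then there is an absolute constant c such that with probability at least 1 − N^{−(3/4)·δ·s} over V ← D_p, Φ_{M,m}(P|_V) ≤ T·d²·n³ · r·s · 2^{c·√n} · binom(N, m + r·s) · binom(n+r, r). -/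

import Mathlib

open MvPolynomial

/-- Projection of a polynomial onto the multilinear monomials in its support. -/
noncomputable def mlProj {F : Type*} [Field F] {σ : Type*} [Fintype σ] [DecidableEq σ]
    (P : MvPolynomial σ F) : MvPolynomial σ F :=
  ∑ m ∈ P.support.filter (fun m => ∀ v, m v ≤ 1), monomial m (coeff m P)

/-- Partial derivative of `P` with respect to the monomial `γ` (iterating `∂/∂X_v`
according to the exponents of `γ`). -/
noncomputable def monDeriv {F : Type*} [Field F] {σ : Type*} [Fintype σ] [DecidableEq σ]
    (γ : σ →₀ ℕ) (P : MvPolynomial σ F) : MvPolynomial σ F :=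
  (Finset.univ : Finset σ).toList.foldr (fun v Q => (fun R => pderiv v R)^[γ v] Q) P

/-- The dimension of the space of `(M, m)`-projected shifted partial derivatives of `P`. -/
noncomputable def Phi {σ : Type*} [Fintype σ] [DecidableEq σ] (F : Type*) [Field F]
    (M : Set (σ →₀ ℕ)) (m : ℕ) (P : MvPolynomial σ F) : ℕ :=
  Module.finrank F (Submodule.span F
    {q : MvPolynomial σ F | ∃ γ ∈ M, ∃ S : Finset σ, S.card = m ∧
      q = mlProj ((∏ i ∈ S, X i) * monDeriv γ P)})

/-- Restriction of `P`: substitute `0` for every variable outside `V`. -/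
noncomputable def restrictPoly {F : Type*} [Field F] {σ : Type*} [DecidableEq σ]
    (V : Finset σ) (P : MvPolynomial σ F) : MvPolynomial σ F :=
  aeval (fun v => if v ∈ V then X v else 0) P

/-- Probability, under the product distribution where each variable is kept alive
independently with probability `p`, of the event `E` of subsets of the variables. -/
noncomputable def restrictProb (σ : Type*) [Fintype σ] (p : ℝ) (E : Finset σ → Prop) : ℝ := by
  classical
  exact ∑ V : Finset σ, if E V then p ^ V.card * (1 - p) ^ (Fintype.card σ - V.card) else 0

/-!
A factor with nonzero constant term is a scalar times `1 + y`, where `y` has no constant term. By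
Newton's identities the product of all these `1 + y_j` is, modulo terms of degree more than `n`, a
linear combination of products of power sums `∑ j, y_j ^ a` indexed by the partitions of the numbers
up to `n`. There are only `2 ^ O(√n)` of these, and this is the one source of that factor. At most
`n` factors without constant term matter, since more of them already exceed degree `n`.

When every factor depends on at most `s` variables, a derivation removes one factor or one power sum
from such a product and leaves a coefficient which is a sum of polynomials in at most `s` variables.
After `r` derivatives at most `r * s` variables occur in a coefficient, so a shifted derivative lies
in the span of the products `X_D · R`, where `m ≤ #D ≤ m + r * s` and `R` is a product with at most
`r` pieces removed, modulo polynomials that contribute no multilinear monomial of the relevant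
degrees.

Under the random restriction a given `Q i j` keeps `s` variables with probability at most
`(N ^ μ * p) ^ s = N ^ (-δ * s)`, and a union bound over the `T * d` factors concludes.
-/

section Partitions

open Finset Real

lemma sum_prod_map_le_prod_inv_one_sub {ι : Type*} {s : Finset ι} {w : ι → ℝ}
    (hw₀ : ∀ i ∈ s, 0 ≤ w i) (hw₁ : ∀ i ∈ s, w i < 1) (T : Finset (Multiset ι))
    (hT : ∀ μ ∈ T, ∀ i ∈ μ, i ∈ s) :
    ∑ μ ∈ T, (μ.map w).prod ≤ ∏ i ∈ s, (1 - w i)⁻¹ := by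
  classical
  let mult (μ : Multiset ι) (i : s) : ℕ := μ.count i.1
  have hmult : Set.InjOn mult T := fun μ hμ ν hν h => by
    ext i
    by_cases hi : i ∈ s
    · exact congr_fun h ⟨i, hi⟩
    · rw [Multiset.count_eq_zero_of_notMem fun hi' => hi (hT μ hμ i hi'),
        Multiset.count_eq_zero_of_notMem fun hi' => hi (hT ν hν i hi')]
  have hgeom (i : s) (k : ℕ) : ∑ j ∈ range k, w i ^ j ≤ (1 - w i)⁻¹ := by
    rw [← tsum_geometric_of_lt_one (hw₀ i i.2) (hw₁ i i.2)]
    exact (summable_geometric_of_lt_one (hw₀ i i.2) (hw₁ i i.2)).sum_le_tsum _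
      fun j _ => pow_nonneg (hw₀ i i.2) j
  calc ∑ μ ∈ T, (μ.map w).prod = ∑ μ ∈ T, ∏ i : s, w i ^ mult μ i := by
        refine sum_congr rfl fun μ hμ => ?_
        rw [prod_multiset_map_count, prod_coe_sort s fun i => w i ^ μ.count i]
        refine prod_subset (fun i hi => hT μ hμ i (Multiset.mem_toFinset.1 hi)) fun i _ hi => ?_
        rw [Multiset.count_eq_zero_of_notMem (mt Multiset.mem_toFinset.2 hi), pow_zero]
    _ = ∑ f ∈ T.image mult, ∏ i : s, w i ^ f i :=
        (sum_image (f := fun f => ∏ i : s, w i ^ f i) hmult).symm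
    _ ≤ ∑ f ∈ Fintype.piFinset fun _ : s => range (T.sup Multiset.card + 1),
          ∏ i : s, w i ^ f i := by
        refine sum_le_sum_of_subset_of_nonneg (image_subset_iff.2 fun μ hμ => ?_) fun f _ _ =>
          prod_nonneg fun i _ => pow_nonneg (hw₀ i i.2) _
        exact Fintype.mem_piFinset.2 fun i => mem_range_succ_iff.2
          ((Multiset.count_le_card _ _).trans (le_sup (f := Multiset.card) hμ))
    _ = ∏ i : s, ∑ k ∈ range (T.sup Multiset.card + 1), w i ^ k := (prod_univ_sum _ _).symm
    _ ≤ ∏ i : s, (1 - w i)⁻¹ := prod_le_prod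
        (fun i _ => sum_nonneg fun k _ => pow_nonneg (hw₀ i i.2) k) fun i _ => hgeom i _
    _ = ∏ i ∈ s, (1 - w i)⁻¹ := prod_coe_sort s fun i => (1 - w i)⁻¹

lemma pow_div_one_sub_pow_le {x : ℝ} (hx₀ : 0 ≤ x) (hx₁ : x < 1) (k : ℕ) :
    x ^ (k + 1) / (1 - x ^ (k + 1)) ≤ x / (1 - x) / (k + 1) := by
  have hgeom : (k + 1) * x ^ k ≤ ∑ i ∈ range (k + 1), x ^ i := by
    simpa using card_nsmul_le_sum (range (k + 1)) (x ^ ·) (x ^ k) fun i hi =>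
      pow_le_pow_of_le_one hx₀ hx₁.le (mem_range_succ_iff.1 hi)
  have hfactor : (1 - x) * ∑ i ∈ range (k + 1), x ^ i = 1 - x ^ (k + 1) := mul_neg_geom_sum x _
  have : 0 < 1 - x := sub_pos.2 hx₁
  rw [div_div, div_le_div_iff₀ (sub_pos.2 (pow_lt_one₀ hx₀ hx₁ k.succ_ne_zero)) (by positivity)]
  calc x ^ (k + 1) * ((1 - x) * (k + 1)) = x * ((1 - x) * ((k + 1) * x ^ k)) := by ring
    _ ≤ x * ((1 - x) * ∑ i ∈ range (k + 1), x ^ i) := by gcongr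
    _ = x * (1 - x ^ (k + 1)) := by rw [hfactor]

/- Expanding `-log (1 - x ^ a) = ∑ k, x ^ (a k) / k` and summing over `a` first leaves
`∑ k, x ^ k / (k (1 - x ^ k)) ≤ x / (1 - x) * ∑ k, 1 / k ^ 2`. -/
lemma prod_inv_one_sub_pow_le_exp {x : ℝ} (hx₀ : 0 ≤ x) (hx₁ : x < 1) (n : ℕ) :
    ∏ a ∈ Icc 1 n, (1 - x ^ a)⁻¹ ≤ exp (x / (1 - x) * (π ^ 2 / 6)) := by
  have hlt {k : ℕ} (hk : k ≠ 0) : x ^ k < 1 := pow_lt_one₀ hx₀ hx₁ hk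
  have hlog : HasSum (fun k : ℕ => ∑ a ∈ Icc 1 n, (x ^ a) ^ (k + 1) / (k + 1))
      (∑ a ∈ Icc 1 n, -log (1 - x ^ a)) := hasSum_sum fun a ha => by
    refine hasSum_pow_div_log_of_abs_lt_one ?_
    rw [abs_of_nonneg (pow_nonneg hx₀ a)]
    exact hlt (by have := (mem_Icc.1 ha).1; omega)
  have hzeta : HasSum (fun k : ℕ => x / (1 - x) * (1 / ((k : ℝ) + 1) ^ 2))
      (x / (1 - x) * (π ^ 2 / 6)) := by
    have := (hasSum_nat_add_iff' 1).2 hasSum_zeta_two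
    simpa using this.mul_left (x / (1 - x))
  have hterm (k : ℕ) : ∑ a ∈ Icc 1 n, (x ^ a) ^ (k + 1) / (k + 1) ≤
      x / (1 - x) * (1 / ((k : ℝ) + 1) ^ 2) := by
    have hgeom := geom_sum_Ico_le_of_lt_one (m := 1) (n := n + 1) (pow_nonneg hx₀ (k + 1))
      (hlt k.succ_ne_zero)
    rw [pow_one] at hgeom
    calc ∑ a ∈ Icc 1 n, (x ^ a) ^ (k + 1) / (k + 1)
        = (∑ a ∈ Ico 1 (n + 1), (x ^ (k + 1)) ^ a) / (k + 1) := by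
          simp_rw [sum_div, ← pow_mul, mul_comm]; rfl
      _ ≤ x / (1 - x) / (k + 1) / (k + 1) := by
          gcongr
          exact hgeom.trans (pow_div_one_sub_pow_le hx₀ hx₁ k)
      _ = x / (1 - x) * (1 / ((k : ℝ) + 1) ^ 2) := by
          rw [div_div, ← sq, div_eq_mul_one_div]
  calc ∏ a ∈ Icc 1 n, (1 - x ^ a)⁻¹ = exp (∑ a ∈ Icc 1 n, -log (1 - x ^ a)) := by
        rw [exp_sum]
        refine prod_congr rfl fun a ha => ?_
        rw [exp_neg, exp_log (sub_pos.2 (hlt (by have := (mem_Icc.1 ha).1; omega)))]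
    _ ≤ exp (x / (1 - x) * (π ^ 2 / 6)) := exp_le_exp.2 (hasSum_le hterm hlog hzeta)

/-- The partitions of the numbers at most `n`, each encoded as the multiset of its parts. -/
def partitionsLE (n : ℕ) : Finset (Multiset ℕ) :=
  (range (n + 1)).biUnion fun l => univ.image (Nat.Partition.parts (n := l))

lemma mem_partitionsLE {n : ℕ} {μ : Multiset ℕ} :
    μ ∈ partitionsLE n ↔ (∀ a ∈ μ, 0 < a) ∧ μ.sum ≤ n := by
  simp only [partitionsLE, mem_biUnion, mem_range_succ_iff, mem_image, mem_univ, true_and]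
  constructor
  · rintro ⟨l, hl, μ, rfl⟩
    exact ⟨fun a => μ.parts_pos, μ.parts_sum.trans_le hl⟩
  · rintro ⟨hpos, hsum⟩
    exact ⟨μ.sum, hsum, ⟨μ, hpos _, rfl⟩, rfl⟩

lemma mem_partitionsLE_of_le {n : ℕ} {μ ν : Multiset ℕ} (h : μ ≤ ν) (hν : ν ∈ partitionsLE n) :
    μ ∈ partitionsLE n := by
  rw [mem_partitionsLE] at hν ⊢
  obtain ⟨ρ, rfl⟩ := Multiset.le_iff_exists_add.1 h
  rw [Multiset.sum_add] at hν
  exact ⟨fun a ha => hν.1 a (Multiset.mem_add.2 (.inl ha)), (Nat.le_add_right _ _).trans hν.2⟩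

lemma card_partitionsLE_mul_pow_le (n : ℕ) {x : ℝ} (hx₀ : 0 ≤ x) (hx₁ : x < 1) :
    #(partitionsLE n) * x ^ n ≤ ∏ a ∈ Icc 1 n, (1 - x ^ a)⁻¹ := by
  have hpow (μ : Multiset ℕ) : (μ.map (x ^ ·)).prod = x ^ μ.sum := by
    induction μ using Multiset.induction with
    | empty => simp
    | cons a μ ih => simp [pow_add, ih]
  calc #(partitionsLE n) * x ^ n = ∑ _μ ∈ partitionsLE n, x ^ n := by simp
    _ ≤ ∑ μ ∈ partitionsLE n, (μ.map (x ^ ·)).prod := by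
        refine sum_le_sum fun μ hμ => ?_
        rw [hpow]
        exact pow_le_pow_of_le_one hx₀ hx₁.le (mem_partitionsLE.1 hμ).2
    _ ≤ ∏ a ∈ Icc 1 n, (1 - x ^ a)⁻¹ := by
        refine sum_prod_map_le_prod_inv_one_sub (fun a _ => pow_nonneg hx₀ a)
          (fun a ha => pow_lt_one₀ hx₀ hx₁ ?_) _ fun μ hμ a ha => ?_
        · have := (mem_Icc.1 ha).1
          omega
        · obtain ⟨hpos, hsum⟩ := mem_partitionsLE.1 hμ
          exact mem_Icc.2 ⟨hpos a ha, (Multiset.single_le_sum (by simp) a ha).trans hsum⟩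

lemma card_partitionsLE_le_exp_add (n : ℕ) {t : ℝ} (ht : 0 < t) :
    (#(partitionsLE n) : ℝ) ≤ exp (n * t + π ^ 2 / 6 / t) := by
  have hlt : exp (-t) < 1 := exp_lt_one_iff.2 (neg_lt_zero.2 ht)
  have hodds : exp (-t) / (1 - exp (-t)) ≤ 1 / t := by
    have := add_one_le_exp t
    rw [div_le_div_iff₀ (sub_pos.2 hlt) ht]
    nlinarith [exp_pos (-t), exp_neg t, mul_inv_cancel₀ (exp_pos t).ne']
  have hcard : #(partitionsLE n) * exp (-t) ^ n ≤ exp (π ^ 2 / 6 / t) := calc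
    #(partitionsLE n) * exp (-t) ^ n ≤ exp (exp (-t) / (1 - exp (-t)) * (π ^ 2 / 6)) :=
        (card_partitionsLE_mul_pow_le n (exp_pos _).le hlt).trans
          (prod_inv_one_sub_pow_le_exp (exp_pos _).le hlt n)
    _ ≤ exp (1 / t * (π ^ 2 / 6)) := by gcongr
    _ = exp (π ^ 2 / 6 / t) := by ring_nf
  calc (#(partitionsLE n) : ℝ) = exp (n * t) * (#(partitionsLE n) * exp (-t) ^ n) := by
        rw [mul_left_comm, ← exp_nat_mul, ← exp_add]
        simp
    _ ≤ exp (n * t) * exp (π ^ 2 / 6 / t) := by gcongr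
    _ = exp (n * t + π ^ 2 / 6 / t) := (exp_add _ _).symm

lemma card_partitionsLE_le_exp_sqrt (n : ℕ) :
    (#(partitionsLE n) : ℝ) ≤ exp (π * √(2 * n / 3)) := by
  rcases n.eq_zero_or_pos with rfl | hn
  · have : partitionsLE 0 ⊆ {0} := fun μ hμ => by
      obtain ⟨hpos, hsum⟩ := mem_partitionsLE.1 hμ
      refine mem_singleton.2 (Multiset.eq_zero_of_forall_notMem fun a ha => ?_)
      have := (Multiset.single_le_sum (by simp) a ha).trans hsum
      have := hpos a ha
      omega
    simpa using card_le_card this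
  refine (card_partitionsLE_le_exp_add n
    (t := π * √(2 * n / 3) / (2 * n)) (by positivity)).trans_eq ?_
  have hpos : 0 < √(2 * n / 3) := by positivity
  have hsq : √(2 * n / 3) ^ 2 = 2 * n / 3 := sq_sqrt (by positivity)
  congr 1
  generalize √(2 * n / 3) = y at hpos hsq ⊢
  field_simp
  linarith

lemma card_partitionsLE_le_two_rpow (n : ℕ) : (#(partitionsLE n) : ℝ) ≤ 2 ^ (4 * √n) := by
  refine (card_partitionsLE_le_exp_sqrt n).trans ?_
  have hπ : π * √(2 / 3) ≤ log 2 * 4 := by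
    refine abs_le_of_sq_le_sq' ?_ (by positivity) |>.2
    rw [mul_pow, sq_sqrt (by norm_num)]
    nlinarith [pi_lt_d2, pi_pos, log_two_gt_d9]
  rw [rpow_def_of_pos two_pos, exp_le_exp, mul_div_right_comm, sqrt_mul (by norm_num), ← mul_assoc,
    ← mul_assoc]
  gcongr

end Partitions

section Binomial

open Finset

lemma sum_choose_add_le {N m k : ℕ} (h : m + k ≤ N / 2) :
    ∑ t ∈ range (k + 1), N.choose (m + t) ≤ (k + 1) * N.choose (m + k) := by
  have hmono {t : ℕ} (ht : t ≤ k) : N.choose (m + t) ≤ N.choose (m + k) := by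
    induction k, ht using Nat.le_induction with
    | base => rfl
    | succ j _ ih =>
      exact (ih (by omega)).trans (Nat.choose_le_succ_of_lt_half_left (r := m + j) (by omega))
  simpa using sum_le_card_nsmul (range (k + 1)) _ _ fun t ht => hmono (mem_range_succ_iff.1 ht)

lemma card_filter_card_mem_Icc_le {σ : Type*} [Fintype σ] {m k : ℕ}
    (h : m + k ≤ Fintype.card σ / 2) :
    #{D : Finset σ | #D ∈ Icc m (m + k)} ≤ (k + 1) * (Fintype.card σ).choose (m + k) := by
  classical
  calc #{D : Finset σ | #D ∈ Icc m (m + k)}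
      ≤ #((range (k + 1)).biUnion fun t => powersetCard (m + t) (univ : Finset σ)) := by
        refine card_le_card fun D hD => ?_
        obtain ⟨hm, hk⟩ := mem_Icc.1 (mem_filter.1 hD).2
        refine mem_biUnion.2 ⟨#D - m, by rw [mem_range]; omega, ?_⟩
        exact mem_powersetCard.2 ⟨subset_univ D, by omega⟩
    _ ≤ ∑ t ∈ range (k + 1), #(powersetCard (m + t) (univ : Finset σ)) := card_biUnion_le
    _ = ∑ t ∈ range (k + 1), (Fintype.card σ).choose (m + t) := by simp
    _ ≤ (k + 1) * (Fintype.card σ).choose (m + k) := sum_choose_add_le h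

lemma card_powerset_filter_card_le {ι : Type*} {Z : Finset ι} {n : ℕ} (hZ : #Z ≤ n) (r : ℕ) :
    #{B ∈ Z.powerset | #B ≤ r} ≤ (n + r).choose r := by
  classical
  calc #{B ∈ Z.powerset | #B ≤ r} ≤ #((range (r + 1)).biUnion fun t => powersetCard t Z) := by
        refine card_le_card fun B hB => ?_
        obtain ⟨hBZ, hBr⟩ := mem_filter.1 hB
        exact mem_biUnion.2 ⟨#B, mem_range_succ_iff.2 hBr,
          mem_powersetCard.2 ⟨mem_powerset.1 hBZ, rfl⟩⟩
    _ ≤ ∑ t ∈ range (r + 1), (#Z).choose t := card_biUnion_le.trans_eq (by simp)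
    _ ≤ ∑ t ∈ range (r + 1), n.choose t * r.choose (r - t) := by
        refine sum_le_sum fun t _ => (Nat.choose_le_choose t hZ).trans ?_
        exact Nat.le_mul_of_pos_right _ (Nat.choose_pos (r.sub_le t))
    _ = (n + r).choose r := by
        rw [Nat.add_choose_eq, Nat.sum_antidiagonal_eq_sum_range_succ_mk]

end Binomial

section RandomRestriction

open Finset

variable {σ : Type*} [Fintype σ] {p : ℝ}

open Classical in
lemma restrictProb_eq_sum (p : ℝ) (E : Finset σ → Prop) :
    restrictProb σ p E =
      ∑ V, if E V then p ^ #V * (1 - p) ^ (Fintype.card σ - #V) else 0 := rfl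

lemma restrictProb_subset (p : ℝ) (B : Finset σ) : restrictProb σ p (B ⊆ ·) = p ^ #B := by
  classical
  have hweight (V : Finset σ) : (if B ⊆ V then p ^ #V * (1 - p) ^ (Fintype.card σ - #V) else 0) =
      (∏ _v ∈ V, p) * ∏ v ∈ Vᶜ, if v ∉ B then 1 - p else 0 := by
    have hsubset : (∀ v ∈ Vᶜ, v ∉ B) ↔ B ⊆ V :=
      ⟨fun h v hv => by_contra fun hvV => h v (mem_compl.2 hvV) hv,
        fun h v hv hvB => mem_compl.1 hv (h hvB)⟩
    rw [prod_ite_zero]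
    simp only [hsubset, prod_const, card_compl, mul_ite, mul_zero]
  have hsum : restrictProb σ p (B ⊆ ·) =
      ∑ V, (∏ _v ∈ V, p) * ∏ v ∈ Vᶜ, if v ∉ B then 1 - p else 0 := by
    rw [restrictProb_eq_sum]
    exact sum_congr rfl fun V _ => by convert hweight V
  rw [hsum, ← Fintype.prod_add]
  have hfactor (v : σ) : p + (if v ∉ B then 1 - p else 0) = if v ∈ B then p else 1 := by
    split_ifs <;> simp_all
  simp_rw [hfactor]
  simp

lemma pow_mul_one_sub_pow_nonneg (hp₀ : 0 ≤ p) (hp₁ : p ≤ 1) (V : Finset σ) :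
    0 ≤ p ^ #V * (1 - p) ^ (Fintype.card σ - #V) :=
  mul_nonneg (pow_nonneg hp₀ _) (pow_nonneg (sub_nonneg.2 hp₁) _)

lemma restrictProb_add_restrictProb_not (p : ℝ) (E : Finset σ → Prop) :
    restrictProb σ p E + restrictProb σ p (fun V => ¬ E V) = 1 := by
  classical
  have htotal := restrictProb_subset p (∅ : Finset σ)
  simp only [empty_subset, card_empty, pow_zero] at htotal
  rw [← htotal, restrictProb_eq_sum, restrictProb_eq_sum, restrictProb_eq_sum, ← sum_add_distrib]
  exact sum_congr rfl fun V _ => by by_cases h : E V <;> simp [h]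

lemma restrictProb_mono (hp₀ : 0 ≤ p) (hp₁ : p ≤ 1) {E E' : Finset σ → Prop}
    (h : ∀ V, E V → E' V) : restrictProb σ p E ≤ restrictProb σ p E' := by
  classical
  rw [restrictProb_eq_sum, restrictProb_eq_sum]
  refine sum_le_sum fun V _ => ?_
  split_ifs with hE hE'
  exacts [le_rfl, absurd (h V hE) hE', pow_mul_one_sub_pow_nonneg hp₀ hp₁ V, le_rfl]

lemma restrictProb_exists_le {ι : Type*} (hp₀ : 0 ≤ p) (hp₁ : p ≤ 1) (s : Finset ι)
    (E : ι → Finset σ → Prop) :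
    restrictProb σ p (fun V => ∃ i ∈ s, E i V) ≤ ∑ i ∈ s, restrictProb σ p (E i) := by
  classical
  simp only [restrictProb_eq_sum]
  rw [sum_comm]
  refine sum_le_sum fun V _ => ?_
  have hnonneg (i : ι) : 0 ≤ if E i V then p ^ #V * (1 - p) ^ (Fintype.card σ - #V) else 0 := by
    split_ifs
    exacts [pow_mul_one_sub_pow_nonneg hp₀ hp₁ V, le_rfl]
  split_ifs with h
  · obtain ⟨i, hi, hE⟩ := h
    simpa only [if_pos hE] using single_le_sum (fun i _ => hnonneg i) hi
  · exact sum_nonneg fun i _ => hnonneg i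

lemma restrictProb_le_card_inter_le [DecidableEq σ] (hp₀ : 0 ≤ p) (hp₁ : p ≤ 1) (A : Finset σ)
    (s : ℕ) : restrictProb σ p (fun V => s ≤ #(A ∩ V)) ≤ (#A * p) ^ s := by
  calc restrictProb σ p (fun V => s ≤ #(A ∩ V))
      ≤ restrictProb σ p (fun V => ∃ B ∈ powersetCard s A, B ⊆ V) :=
        restrictProb_mono hp₀ hp₁ fun V hV => by
          obtain ⟨B, hB, hBs⟩ := exists_subset_card_eq hV
          obtain ⟨hBA, hBV⟩ := subset_inter_iff.1 hB
          exact ⟨B, mem_powersetCard.2 ⟨hBA, hBs⟩, hBV⟩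
    _ ≤ ∑ B ∈ powersetCard s A, restrictProb σ p (B ⊆ ·) := restrictProb_exists_le hp₀ hp₁ _ _
    _ = ∑ _B ∈ powersetCard s A, p ^ s := sum_congr rfl fun _ hB => by
        rw [restrictProb_subset, (mem_powersetCard.1 hB).2]
    _ = (#A).choose s * p ^ s := by simp
    _ ≤ #A ^ s * p ^ s := by
        gcongr
        exact_mod_cast Nat.choose_le_pow _ _
    _ = (#A * p) ^ s := (mul_pow _ _ _).symm

lemma one_sub_le_restrictProb_forall_card_inter_lt [DecidableEq σ] {ι : Type*} [Fintype ι]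
    (hp₀ : 0 ≤ p) (hp₁ : p ≤ 1) (A : ι → Finset σ) {K : ℝ} (hA : ∀ i, (#(A i) : ℝ) ≤ K) (s : ℕ) :
    1 - Fintype.card ι * (K * p) ^ s ≤ restrictProb σ p (fun V => ∀ i, #(A i ∩ V) < s) := by
  have hbad : restrictProb σ p (fun V => ¬ ∀ i, #(A i ∩ V) < s) ≤
      Fintype.card ι * (K * p) ^ s := calc
    restrictProb σ p (fun V => ¬ ∀ i, #(A i ∩ V) < s)
      ≤ restrictProb σ p (fun V => ∃ i ∈ univ, s ≤ #(A i ∩ V)) :=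
        restrictProb_mono hp₀ hp₁ fun V hV => by simpa using hV
    _ ≤ ∑ i, restrictProb σ p (fun V => s ≤ #(A i ∩ V)) := restrictProb_exists_le hp₀ hp₁ _ _
    _ ≤ ∑ _i : ι, (K * p) ^ s := sum_le_sum fun i _ =>
        (restrictProb_le_card_inter_le hp₀ hp₁ (A i) s).trans (by gcongr; exact hA i)
    _ = Fintype.card ι * (K * p) ^ s := by simp
  linarith [restrictProb_add_restrictProb_not p fun V : Finset σ => ∀ i, #(A i ∩ V) < s]

end RandomRestriction

section LinearAlgebra

lemma finrank_le_finrank_of_le_sup_of_disjoint {K E : Type*} [DivisionRing K] [AddCommGroup E]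
    [Module K E] {U V J : Submodule K E} [FiniteDimensional K U] (hle : V ≤ U ⊔ J)
    (hdisj : Disjoint V J) : Module.finrank K V ≤ Module.finrank K U := by
  have hinj : Function.Injective (J.mkQ.domRestrict V) := by
    rwa [← LinearMap.ker_eq_bot, LinearMap.ker_domRestrict, Submodule.ker_mkQ,
      ← Submodule.disjoint_iff_comap_eq_bot]
  have hmap : V.map J.mkQ ≤ U.map J.mkQ := by
    simpa [Submodule.map_sup] using Submodule.map_mono (f := J.mkQ) hle
  calc Module.finrank K V = Module.finrank K (V.map J.mkQ) := by
        rw [← LinearMap.range_domRestrict, LinearMap.finrank_range_of_inj hinj]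
    _ ≤ Module.finrank K (U.map J.mkQ) := Submodule.finrank_mono hmap
    _ ≤ Module.finrank K U := Submodule.finrank_map_le _ _

end LinearAlgebra

section Newton

open Finset MvPolynomial

lemma mul_psum_mem_span_psumPart {R J : Type*} [CommSemiring R] [Fintype J] {a b : ℕ} (hb : 0 < b)
    {x : MvPolynomial J R} (hx : x ∈ Submodule.span R (Set.range (psumPart J R (n := a)))) :
    x * psum J R b ∈ Submodule.span R (Set.range (psumPart J R (n := a + b))) := by
  suffices Submodule.span R (Set.range (psumPart J R (n := a))) ≤
      (Submodule.span R (Set.range (psumPart J R (n := a + b)))).comap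
        (LinearMap.mulRight R (psum J R b)) from this hx
  rw [Submodule.span_le]
  rintro _ ⟨μ, rfl⟩
  have hpos {i : ℕ} (hi : i ∈ b ::ₘ μ.parts) : 0 < i := by
    obtain rfl | hi := Multiset.mem_cons.1 hi
    exacts [hb, μ.parts_pos hi]
  refine Submodule.subset_span
    ⟨⟨b ::ₘ μ.parts, hpos, by rw [Multiset.sum_cons, μ.parts_sum, add_comm]⟩, ?_⟩
  simp [psumPart, mul_comm]

variable {F J : Type*} [Field F] [Fintype J]

lemma esymm_mem_span_psumPart (k : ℕ) (hk : ∀ i, 0 < i → i ≤ k → (i : F) ≠ 0) :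
    esymm J F k ∈ Submodule.span F (Set.range (psumPart J F (n := k))) := by
  induction k using Nat.strong_induction_on with
  | _ k ih =>
    obtain rfl | hk₀ := k.eq_zero_or_pos
    · exact Submodule.subset_span ⟨.indiscrete 0, by simp⟩
    have hsign (i : ℕ) {x : MvPolynomial J F} {W : Submodule F (MvPolynomial J F)} (hx : x ∈ W) :
        (-1) ^ i * x ∈ W := by
      rcases neg_one_pow_eq_or (MvPolynomial J F) i with h | h <;> simpa [h] using hx
    have hnewton : (k : F) • esymm J F k ∈
        Submodule.span F (Set.range (psumPart J F (n := k))) := by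
      rw [smul_eq_C_mul, map_natCast, mul_esymm_eq_sum]
      refine hsign _ (sum_mem fun ⟨a, b⟩ hab => ?_)
      obtain ⟨hsum, hlt⟩ : a + b = k ∧ a < k := by simpa using hab
      subst hsum
      rw [mul_assoc]
      exact hsign _ (mul_psum_mem_span_psumPart (by omega)
        (ih a hlt fun i hi hia => hk i hi (by omega)))
    simpa [smul_smul, hk k hk₀ le_rfl] using Submodule.smul_mem _ (k : F)⁻¹ hnewton

variable {A : Type*} [CommRing A] [Algebra F A]

lemma aeval_esymm_mem_span_prod_map {n l : ℕ} (hl : l ≤ n)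
    (hn : ∀ i, 0 < i → i ≤ n → (i : F) ≠ 0) (y : J → A) :
    aeval y (esymm J F l) ∈
      Submodule.span F ((fun μ : Multiset ℕ => (μ.map fun a => ∑ j, y j ^ a).prod) ''
        partitionsLE n) := by
  have hmem := Submodule.mem_map_of_mem (f := (aeval (R := F) y).toLinearMap)
    (esymm_mem_span_psumPart (J := J) l fun i hi hil => hn i hi (hil.trans hl))
  rw [Submodule.map_span] at hmem
  refine Submodule.span_mono ?_ hmem
  rintro _ ⟨_, ⟨μ, rfl⟩, rfl⟩
  refine ⟨μ.parts, mem_partitionsLE.2 ⟨fun a => μ.parts_pos, μ.parts_sum.trans_le hl⟩, ?_⟩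
  simp [psumPart, psum, map_multiset_prod, Function.comp_def]

lemma prod_one_add_mem_span_sup_pow {n : ℕ} (hn : ∀ i, 0 < i → i ≤ n → (i : F) ≠ 0) {I : Ideal A}
    {y : J → A} (hy : ∀ j, y j ∈ I) :
    ∏ j, (1 + y j) ∈
      Submodule.span F ((fun μ : Multiset ℕ => (μ.map fun a => ∑ j, y j ^ a).prod) ''
        partitionsLE n) ⊔ (I ^ (n + 1)).restrictScalars F := by
  have hexpand : ∏ j, (1 + y j) =
      ∑ l ∈ range (Fintype.card J + 1), aeval y (esymm J F l) := by
    rw [prod_one_add, sum_powerset, card_univ]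
    simp [esymm, map_sum, map_prod]
  rw [hexpand]
  refine sum_mem fun l _ => ?_
  by_cases hl : l ≤ n
  · exact Submodule.mem_sup_left (aeval_esymm_mem_span_prod_map hl hn y)
  · refine Submodule.mem_sup_right (Submodule.restrictScalars_mem _ _ _ |>.2 ?_)
    rw [esymm, map_sum]
    refine sum_mem fun t ht => ?_
    have hprod : ∏ j ∈ t, y j ∈ I ^ l := by
      rw [← (mem_powersetCard.1 ht).2, ← prod_const]
      exact Ideal.prod_mem_prod fun j _ => hy j
    simpa [map_prod] using Ideal.pow_le_pow_right (by omega) hprod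

end Newton

section Derivation

variable {R A ι : Type*} [CommSemiring R] [CommSemiring A] [Algebra R A] (D : Derivation R A A)
  [DecidableEq ι]

lemma derivation_multiset_prod_map (f : ι → A) (μ : Multiset ι) :
    D (μ.map f).prod = (μ.map fun i => ((μ.erase i).map f).prod * D (f i)).sum := by
  induction μ using Multiset.induction with
  | empty => simp
  | cons i μ ih =>
    have hcons : ∀ j ∈ μ, (((i ::ₘ μ).erase j).map f).prod = f i * ((μ.erase j).map f).prod := by
      intro j hj
      rw [← Multiset.prod_cons, ← Multiset.map_cons]
      by_cases hij : j = i
      · rw [hij, Multiset.erase_cons_head, Multiset.cons_erase (hij ▸ hj)]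
      · rw [Multiset.erase_cons_tail μ (Ne.symm hij)]
    rw [Multiset.map_cons, Multiset.prod_cons, Derivation.leibniz, ih, Multiset.map_cons,
      Multiset.sum_cons, Multiset.erase_cons_head, smul_eq_mul, smul_eq_mul, add_comm,
      ← Multiset.sum_map_mul_left]
    refine congr_arg₂ _ rfl (congr_arg _ (Multiset.map_congr rfl fun j hj => ?_))
    rw [hcons j hj, mul_assoc]

lemma derivation_finset_prod (f : ι → A) (s : Finset ι) :
    D (∏ i ∈ s, f i) = ∑ i ∈ s, (∏ j ∈ s.erase i, f j) * D (f i) :=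
  derivation_multiset_prod_map D f s.val

end Derivation

lemma derivation_mem_ideal_pow {R A : Type*} [CommSemiring R] [CommSemiring A] [Algebra R A]
    (D : Derivation R A A) (I : Ideal A) {n : ℕ} {x : A} (hx : x ∈ I ^ n) : D x ∈ I ^ (n - 1) := by
  induction n generalizing x with
  | zero => simp
  | succ n ih =>
    rw [pow_succ] at hx
    refine Submodule.mul_induction_on hx (fun a ha b hb => ?_) fun a b ha hb => ?_
    · rw [Derivation.leibniz, smul_eq_mul, smul_eq_mul]
      refine add_mem (Ideal.mul_mem_right _ _ ha) ?_
      obtain rfl | hn := n.eq_zero_or_pos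
      · simp
      · simpa [Nat.sub_add_cancel hn, ← pow_succ'] using Ideal.mul_mem_mul hb (ih ha)
    · rw [map_add]
      exact add_mem ha hb

section Support

variable {R σ : Type*} [CommSemiring R]

lemma pderiv_mem_restrictSupport {s t : Set (σ →₀ ℕ)} {v : σ}
    (hst : ∀ e ∈ s, e v ≠ 0 → e - Finsupp.single v 1 ∈ t) {P : MvPolynomial σ R}
    (hP : P ∈ restrictSupport R s) : pderiv v P ∈ restrictSupport R t := by
  suffices restrictSupport R s ≤ (restrictSupport R t).comap (pderiv v).toLinearMap from this hP
  rw [restrictSupport_eq_span, Submodule.span_le]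
  rintro _ ⟨e, he, rfl⟩
  by_cases hev : e v = 0 <;> simp [pderiv_monomial, hev, hst e he]

/-- The polynomials each of whose monomials involves at most `k` variables. Unlike the polynomials
depending on at most `k` variables, they form a submodule. -/
noncomputable def fewVars (R σ : Type*) [CommSemiring R] (k : ℕ) :
    Submodule R (MvPolynomial σ R) :=
  restrictSupport R {e | e.support.card ≤ k}

lemma fewVars_mono {k l : ℕ} (h : k ≤ l) : fewVars R σ k ≤ fewVars R σ l :=
  restrictSupport_mono R fun _ (he : _ ≤ k) => he.trans h

lemma mem_fewVars_of_card_vars_le {k : ℕ} {P : MvPolynomial σ R} (h : P.vars.card ≤ k) :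
    P ∈ fewVars R σ k := fun e he =>
  (Finset.card_le_card fun v hv => (mem_vars_iff_mem_support v).2 ⟨e, he, hv⟩).trans h

lemma fewVars_mul_le (k l : ℕ) : fewVars R σ k * fewVars R σ l ≤ fewVars R σ (k + l) := by
  classical
  rw [fewVars, fewVars, ← restrictSupport_add]
  refine restrictSupport_mono R ?_
  rintro _ ⟨a, ha, b, hb, rfl⟩
  exact (Finset.card_le_card Finsupp.support_add).trans
    ((Finset.card_union_le _ _).trans (add_le_add ha hb))

lemma pderiv_mem_fewVars {k : ℕ} {P : MvPolynomial σ R} (hP : P ∈ fewVars R σ k) (v : σ) :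
    pderiv v P ∈ fewVars R σ k :=
  pderiv_mem_restrictSupport (fun _ (he : _ ≤ k) _ =>
    (Finset.card_le_card (Finsupp.support_mono tsub_le_self)).trans he) hP

lemma mem_idealOfVars_of_constantCoeff_eq_zero {P : MvPolynomial σ R} (h : constantCoeff P = 0) :
    P ∈ idealOfVars σ R := by
  rw [← pow_one (idealOfVars σ R), mem_pow_idealOfVars_iff']
  intro e he
  rwa [(Finsupp.degree_eq_zero_iff e).1 (by omega)]

end Support

section MonomialDerivatives

lemma degree_sub_single_add_one {σ : Type*} {e : σ →₀ ℕ} {v : σ} (h : e v ≠ 0) :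
    (e - Finsupp.single v 1).degree + 1 = e.degree := by
  have hle : Finsupp.single v 1 ≤ e := Finsupp.single_le_iff.2 (Nat.one_le_iff_ne_zero.2 h)
  simpa using congr_arg Finsupp.degree (tsub_add_cancel_of_le hle)

variable {F σ : Type*} [Field F] [Fintype σ] [DecidableEq σ]

lemma monDeriv_eq_prod_pow_apply (γ : σ →₀ ℕ) (P : MvPolynomial σ F) :
    monDeriv γ P = (Finset.univ.toList.map fun v =>
      ((pderiv v).toLinearMap : Module.End F (MvPolynomial σ F)) ^ γ v).prod P := by
  unfold monDeriv
  induction (Finset.univ : Finset σ).toList with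
  | nil => rfl
  | cons v l ih =>
    rw [List.foldr_cons, ih, List.map_cons, List.prod_cons, Module.End.mul_apply,
      Module.End.pow_apply]
    rfl

lemma monDeriv_sum_C_mul {I : Type*} [Fintype I] (γ : σ →₀ ℕ) (α : I → F)
    (f : I → MvPolynomial σ F) :
    monDeriv γ (∑ i, C (α i) * f i) = ∑ i, C (α i) * monDeriv γ (f i) := by
  simp only [monDeriv_eq_prod_pow_apply, C_mul', map_sum, map_smul]

lemma monDeriv_mem {W : ℕ → Submodule F (MvPolynomial σ F)}
    (hW : ∀ k v, ∀ P ∈ W k, pderiv v P ∈ W (k + 1)) (γ : σ →₀ ℕ) {P : MvPolynomial σ F}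
    (hP : P ∈ W 0) : monDeriv γ P ∈ W γ.degree := by
  have hiter (v : σ) (j k : ℕ) (R) (hR : R ∈ W k) :
      (fun R => pderiv v R)^[j] R ∈ W (j + k) := by
    induction j with
    | zero => simpa using hR
    | succ j ih =>
      rw [Function.iterate_succ_apply', add_right_comm]
      exact hW _ v _ ih
  have hlist (l : List σ) :
      l.foldr (fun v Q => (fun R => pderiv v R)^[γ v] Q) P ∈ W (l.map γ).sum := by
    induction l with
    | nil => simpa using hP
    | cons v l ih => simpa using hiter v (γ v) _ _ ih
  have huniv := hlist Finset.univ.toList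
  rwa [Finset.sum_map_toList, ← Finsupp.degree_eq_sum] at huniv

lemma monDeriv_mem_restrictSupport (γ : σ →₀ ℕ) (P : MvPolynomial σ F) :
    monDeriv γ P ∈ restrictSupport F {e | e.degree + γ.degree ≤ P.totalDegree} := by
  refine monDeriv_mem (W := fun k => restrictSupport F {e | e.degree + k ≤ P.totalDegree})
    (fun k v R hR => pderiv_mem_restrictSupport (fun e he hev => ?_) hR) γ fun e he => ?_
  · have := degree_sub_single_add_one hev
    simp only [Set.mem_ofPred_eq] at he ⊢
    omega
  · exact le_totalDegree he

end MonomialDerivatives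

section Multilinear

variable {F σ : Type*} [Field F]

/-- The exponents of the multilinear monomials of degree at most `D`. -/
def multilinearExponents (σ : Type*) (D : ℕ) : Set (σ →₀ ℕ) :=
  {e | (∀ v, e v ≤ 1) ∧ e.degree ≤ D}

lemma isLowerSet_multilinearExponents (D : ℕ) : IsLowerSet (multilinearExponents σ D) :=
  fun _ _ hle he => ⟨fun v => (hle v).trans (he.1 v), (Finsupp.degree_mono hle).trans he.2⟩

/-- The ideal of the polynomials without multilinear monomials of degree at most `D`, which the
projected shifts of degree at most `D` do not see. -/
noncomputable def negligibleIdeal (F σ : Type*) [Field F] (D : ℕ) : Ideal (MvPolynomial σ F) :=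
  restrictSupportIdeal F _ (isLowerSet_multilinearExponents D).compl

lemma disjoint_restrictSupport_negligibleIdeal (D : ℕ) :
    Disjoint (restrictSupport F (multilinearExponents σ D))
      ((negligibleIdeal F σ D).restrictScalars F) := by
  refine Submodule.disjoint_def.2 fun P hP hP' => support_eq_empty.1 ?_
  exact Finset.eq_empty_of_forall_notMem fun e he => hP' he (hP he)

lemma pow_idealOfVars_le_negligibleIdeal {D k : ℕ} (h : D < k) :
    idealOfVars σ F ^ k ≤ negligibleIdeal F σ D := fun P hP e he he' => by
  have := (mem_pow_idealOfVars_iff k P).1 hP e he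
  exact absurd he'.2 (by omega)

lemma prod_X_mul_mem_negligibleIdeal {D k : ℕ} {S : Finset σ} {P : MvPolynomial σ F}
    (hP : P ∈ idealOfVars σ F ^ k) (h : D < S.card + k) :
    (∏ v ∈ S, X v) * P ∈ negligibleIdeal F σ D := by
  refine pow_idealOfVars_le_negligibleIdeal h ?_
  rw [pow_add]
  refine Ideal.mul_mem_mul ?_ hP
  rw [← Finset.prod_const]
  exact Ideal.prod_mem_prod fun v _ => Ideal.subset_span ⟨v, rfl⟩

lemma monomial_one_eq_prod_support {e : σ →₀ ℕ} (h : ∀ v, e v ≤ 1) :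
    (monomial e 1 : MvPolynomial σ F) = ∏ v ∈ e.support, X v := by
  rw [monomial_eq, C_1, one_mul]
  refine Finset.prod_congr rfl fun v hv => ?_
  have hone := (h v).antisymm (Nat.one_le_iff_ne_zero.2 (Finsupp.mem_support_iff.1 hv))
  simp only [hone, pow_one]

variable [Fintype σ]

open Classical in
/-- The multilinear monomials of degree between `m` and `m + k`. -/
noncomputable def multilinearMonomials (F σ : Type*) [Field F] [Fintype σ] (m k : ℕ) :
    Finset (MvPolynomial σ F) :=
  (Finset.univ.filter fun S : Finset σ => S.card ∈ Finset.Icc m (m + k)).image fun S => ∏ v ∈ S, X v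

lemma prod_X_mul_mem_span_sup_negligibleIdeal {S : Finset σ} {k : ℕ} {P : MvPolynomial σ F}
    (hP : P ∈ fewVars F σ k) (D : ℕ) : (∏ v ∈ S, X v) * P ∈
      Submodule.span F (multilinearMonomials F σ S.card k) ⊔
        (negligibleIdeal F σ D).restrictScalars F := by
  classical
  suffices fewVars F σ k ≤ (Submodule.span F (multilinearMonomials F σ S.card k : Set _) ⊔
      (negligibleIdeal F σ D).restrictScalars F).comap (LinearMap.mulLeft F (∏ v ∈ S, X v)) from
    this hP
  rw [fewVars, restrictSupport_eq_span, Submodule.span_le]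
  rintro _ ⟨e, he, rfl⟩
  set f : σ →₀ ℕ := ∑ v ∈ S, Finsupp.single v 1
  have hprod : (∏ v ∈ S, X v) * monomial e 1 = (monomial (f + e) 1 : MvPolynomial σ F) := by
    rw [← mul_one (1 : F), ← monomial_mul, mul_one, monomial_sum_one]
    rfl
  have hsupp : (f + e).support = S ∪ e.support := by
    ext v
    simp [f, Finsupp.single_apply]
    tauto
  simp only [SetLike.mem_coe, Submodule.mem_comap, LinearMap.mulLeft_apply, hprod]
  by_cases hml : ∀ v, (f + e) v ≤ 1
  · refine Submodule.mem_sup_left (Submodule.subset_span ?_)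
    rw [monomial_one_eq_prod_support hml, hsupp]
    refine Finset.mem_coe.2 (Finset.mem_image_of_mem _ (Finset.mem_filter.2
      ⟨Finset.mem_univ _, Finset.mem_Icc.2 ⟨Finset.card_le_card Finset.subset_union_left, ?_⟩⟩))
    exact (Finset.card_union_le _ _).trans (Nat.add_le_add_left he _)
  · refine Submodule.mem_sup_right ((monomial_mem_restrictSupport F).2 (Or.inl fun hmem => ?_))
    exact hml hmem.1

variable [DecidableEq σ]

lemma coeff_mlProj (P : MvPolynomial σ F) (e : σ →₀ ℕ) :
    coeff e (mlProj P) = if ∀ v, e v ≤ 1 then coeff e P else 0 := by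
  classical
  simp only [mlProj, coeff_sum, coeff_monomial, Finset.sum_ite_eq', Finset.mem_filter,
    mem_support_iff]
  by_cases h : coeff e P = 0 <;> simp [h]

lemma mlProj_mem_restrictSupport {D : ℕ} {P : MvPolynomial σ F} (h : P.totalDegree ≤ D) :
    mlProj P ∈ restrictSupport F (multilinearExponents σ D) := fun e he => by
  have he' : coeff e (mlProj P) ≠ 0 := mem_support_iff.1 he
  rw [coeff_mlProj, ne_eq, ite_eq_right_iff, Classical.not_imp] at he'
  exact ⟨he'.1, (le_totalDegree (mem_support_iff.2 he'.2)).trans h⟩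

lemma sub_mlProj_mem_negligibleIdeal (P : MvPolynomial σ F) (D : ℕ) :
    P - mlProj P ∈ negligibleIdeal F σ D := fun e he he' => by
  have hcoeff : coeff e (P - mlProj P) ≠ 0 := mem_support_iff.1 he
  rw [coeff_sub, coeff_mlProj, if_pos he'.1, sub_self] at hcoeff
  exact hcoeff rfl

end Multilinear

section Products

variable {F σ J : Type*} [Field F]

/-- A nonzero constant term is scaled to `1` and then removed; a polynomial without constant term is
sent to `0`. -/
noncomputable def normalizedTail (q : MvPolynomial σ F) : MvPolynomial σ F :=
  open Classical in if constantCoeff q = 0 then 0 else C (constantCoeff q)⁻¹ * q - 1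

lemma normalizedTail_mem_idealOfVars (q : MvPolynomial σ F) :
    normalizedTail q ∈ idealOfVars σ F := by
  apply mem_idealOfVars_of_constantCoeff_eq_zero
  unfold normalizedTail
  split_ifs with h <;> simp [h]

lemma C_mul_one_add_normalizedTail {q : MvPolynomial σ F} (h : constantCoeff q ≠ 0) :
    C (constantCoeff q) * (1 + normalizedTail q) = q := by
  rw [normalizedTail, if_neg h, add_sub_cancel, ← mul_assoc, ← C_mul, mul_inv_cancel₀ h, C_1,
    one_mul]

lemma normalizedTail_pow_mem_fewVars {q : MvPolynomial σ F} {s : ℕ} (h : q.vars.card ≤ s)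
    (a : ℕ) : normalizedTail q ^ a ∈ fewVars F σ s := by
  classical
  refine mem_fewVars_of_card_vars_le ((Finset.card_le_card ?_).trans h)
  refine (vars_pow _ _).trans ?_
  unfold normalizedTail
  split_ifs with h0
  · simp
  · refine (vars_sub_subset (p := C (constantCoeff q)⁻¹ * q) (q := 1)).trans ?_
    rw [vars_C_mul _ (inv_ne_zero h0)]
    simp

lemma prod_eq_C_mul_prod_mul_prod_one_add [Fintype J] (Q : J → MvPolynomial σ F) :
    open Classical in
    ∏ j, Q j = C (∏ j with constantCoeff (Q j) ≠ 0, constantCoeff (Q j)) *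
      (∏ j with constantCoeff (Q j) = 0, Q j) * ∏ j, (1 + normalizedTail (Q j)) := by
  classical
  have hone : ∏ j with constantCoeff (Q j) = 0, (1 + normalizedTail (Q j)) = 1 :=
    Finset.prod_eq_one fun j hj => by simp [normalizedTail, (Finset.mem_filter.1 hj).2]
  rw [← Finset.prod_filter_mul_prod_filter_not _ (fun j => constantCoeff (Q j) = 0),
    ← Finset.prod_filter_mul_prod_filter_not (f := fun j => 1 + normalizedTail (Q j)) _
      (fun j => constantCoeff (Q j) = 0), hone, one_mul, map_prod, mul_right_comm,
    ← Finset.prod_mul_distrib, mul_comm]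
  exact congr_arg (· * _) (Finset.prod_congr rfl fun j hj =>
    (C_mul_one_add_normalizedTail (Finset.mem_filter.1 hj).2).symm)

open Classical in
/-- The products of all but at most `k` of the `q j` with `j ∈ Z` and of the `p a` with `a` running
over a partition of a number at most `n`. -/
noncomputable def partialProducts {A : Type*} [CommSemiring A] (Z : Finset J) (q : J → A)
    (p : ℕ → A) (n k : ℕ) : Finset A :=
  ((Z.powerset.filter fun B => B.card ≤ k) ×ˢ partitionsLE n).image fun t =>
    (∏ j ∈ Z \ t.1, q j) * (t.2.map p).prod

lemma mem_partialProducts [DecidableEq J] {A : Type*} [CommSemiring A] {Z : Finset J} {q : J → A}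
    {p : ℕ → A} {n k : ℕ} {x : A} :
    x ∈ partialProducts Z q p n k ↔ ∃ B ⊆ Z, B.card ≤ k ∧ ∃ μ ∈ partitionsLE n,
      (∏ j ∈ Z \ B, q j) * (μ.map p).prod = x := by
  classical
  simp only [partialProducts, Finset.mem_image, Finset.mem_product, Finset.mem_filter,
    Finset.mem_powerset, Prod.exists, exists_and_left, and_assoc]
  congr!

lemma partialProducts_mono {A : Type*} [CommSemiring A] (Z : Finset J) (q : J → A) (p : ℕ → A)
    (n : ℕ) {k l : ℕ} (h : k ≤ l) : partialProducts Z q p n k ⊆ partialProducts Z q p n l := by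
  classical
  intro x hx
  obtain ⟨B, hB, hk, hx⟩ := mem_partialProducts.1 hx
  exact mem_partialProducts.2 ⟨B, hB, hk.trans h, hx⟩

lemma card_partialProducts_le {A : Type*} [CommSemiring A] {Z : Finset J} {n : ℕ}
    (hZ : Z.card ≤ n) (q : J → A) (p : ℕ → A) (k : ℕ) :
    (partialProducts Z q p n k).card ≤ (n + k).choose k * (partitionsLE n).card := by
  classical
  refine Finset.card_image_le.trans ?_
  rw [Finset.card_product]
  exact Nat.mul_le_mul_right _ (card_powerset_filter_card_le hZ k)

variable {Z : Finset J} {q : J → MvPolynomial σ F} {p : ℕ → MvPolynomial σ F} {s : ℕ}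

lemma pderiv_mem_fewVars_mul_span (hq : ∀ j, q j ∈ fewVars F σ s) (hp : ∀ a, p a ∈ fewVars F σ s)
    {n k : ℕ} (v : σ) {x : MvPolynomial σ F}
    (hx : x ∈ Submodule.span F (partialProducts Z q p n k : Set (MvPolynomial σ F))) :
    pderiv v x ∈ fewVars F σ s *
      Submodule.span F (partialProducts Z q p n (k + 1) : Set (MvPolynomial σ F)) := by
  classical
  suffices Submodule.span F (partialProducts Z q p n k : Set (MvPolynomial σ F)) ≤
      (fewVars F σ s * Submodule.span F (partialProducts Z q p n (k + 1))).comap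
        (pderiv v).toLinearMap from this hx
  rw [Submodule.span_le]
  intro x hx
  obtain ⟨B, hBZ, hBk, μ, hμ, rfl⟩ := mem_partialProducts.1 hx
  have hterm {C : Finset J} {ν : Multiset ℕ} {g : MvPolynomial σ F} (hC : C ⊆ Z)
      (hCk : C.card ≤ k + 1) (hν : ν ∈ partitionsLE n) (hg : g ∈ fewVars F σ s) :
      g * ((∏ j ∈ Z \ C, q j) * (ν.map p).prod) ∈ fewVars F σ s *
        Submodule.span F (partialProducts Z q p n (k + 1)) :=
    Submodule.mul_mem_mul hg (Submodule.subset_span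
      (mem_partialProducts.2 ⟨C, hC, hCk, ν, hν, rfl⟩))
  rw [SetLike.mem_coe, Submodule.mem_comap, Derivation.coeFn_coe, Derivation.leibniz,
    derivation_multiset_prod_map, derivation_finset_prod, smul_eq_mul, smul_eq_mul,
    ← Multiset.sum_map_mul_left, Finset.mul_sum]
  refine add_mem (multiset_sum_mem _ fun x hx => ?_) (sum_mem fun j hj => ?_)
  · obtain ⟨a, -, rfl⟩ := Multiset.mem_map.1 hx
    convert hterm hBZ (by omega) (mem_partitionsLE_of_le (Multiset.erase_le a μ) hμ)
      (pderiv_mem_fewVars (hp a) v) using 1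
    ring
  · obtain ⟨hjZ, -⟩ := Finset.mem_sdiff.1 hj
    convert hterm (Finset.insert_subset hjZ hBZ) ((Finset.card_insert_le j B).trans (by omega)) hμ
      (pderiv_mem_fewVars (hq j) v) using 1
    rw [Finset.sdiff_insert]
    ring

/-- Contains the derivatives of order `k` of the product of the `q j` with `j ∈ Z` and of a
polynomial that is, modulo monomials of degree above `n`, a combination of products of the `p a`. -/
noncomputable def derivativeSpan (Z : Finset J) (q : J → MvPolynomial σ F)
    (p : ℕ → MvPolynomial σ F) (n s k : ℕ) : Submodule F (MvPolynomial σ F) :=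
  fewVars F σ (k * s) * Submodule.span F (partialProducts Z q p n k) ⊔
    (idealOfVars σ F ^ (n + 1 - k)).restrictScalars F

lemma pderiv_mem_derivativeSpan (hq : ∀ j, q j ∈ fewVars F σ s) (hp : ∀ a, p a ∈ fewVars F σ s)
    {n k : ℕ} (v : σ) {x : MvPolynomial σ F} (hx : x ∈ derivativeSpan Z q p n s k) :
    pderiv v x ∈ derivativeSpan Z q p n s (k + 1) := by
  obtain ⟨y, hy, z, hz, rfl⟩ := Submodule.mem_sup.1 hx
  rw [map_add]
  refine Submodule.add_mem_sup ?_ (derivation_mem_ideal_pow _ _ hz)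
  suffices fewVars F σ (k * s) * Submodule.span F (partialProducts Z q p n k) ≤
      (fewVars F σ ((k + 1) * s) * Submodule.span F (partialProducts Z q p n (k + 1))).comap
        (pderiv v).toLinearMap from this hy
  refine Submodule.mul_le.2 fun g hg c hc => ?_
  rw [Submodule.mem_comap, Derivation.coeFn_coe, Derivation.leibniz, smul_eq_mul, smul_eq_mul,
    mul_comm c]
  refine add_mem ?_ (Submodule.mul_mem_mul ?_ ?_)
  · rw [add_one_mul]
    refine mul_le_mul' (fewVars_mul_le (k * s) s) le_rfl ?_
    rw [mul_assoc]
    exact Submodule.mul_mem_mul hg (pderiv_mem_fewVars_mul_span hq hp v hc)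
  · exact fewVars_mono (Nat.mul_le_mul_right s k.le_succ) (pderiv_mem_fewVars hg v)
  · exact Submodule.span_mono (partialProducts_mono Z q p n k.le_succ) hc

lemma prod_mem_derivativeSpan_zero [Fintype J] {n : ℕ} (hn : ∀ i, 0 < i → i ≤ n → (i : F) ≠ 0)
    (q : J → MvPolynomial σ F) (s : ℕ) :
    open Classical in
    ∏ j, q j ∈ derivativeSpan {j | constantCoeff (q j) = 0} q
      (fun a => ∑ j, normalizedTail (q j) ^ a) n s 0 := by
  classical
  rw [derivativeSpan, zero_mul, prod_eq_C_mul_prod_mul_prod_one_add]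
  set Z : Finset J := {j | constantCoeff (q j) = 0}
  obtain ⟨x, hx, y, hy, hxy⟩ := Submodule.mem_sup.1 (prod_one_add_mem_span_sup_pow hn
    fun j => normalizedTail_mem_idealOfVars (q j))
  rw [← hxy, mul_add]
  refine Submodule.add_mem_sup ?_ (Ideal.mul_mem_left _ _ hy)
  rw [mul_assoc]
  refine Submodule.mul_mem_mul (mem_fewVars_of_card_vars_le (by rw [vars_C, Finset.card_empty])) ?_
  rw [← LinearMap.mulLeft_apply (R := F), ← Submodule.mem_comap]
  refine Submodule.span_le.2 ?_ hx
  rintro _ ⟨μ, hμ, rfl⟩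
  refine Submodule.subset_span (mem_partialProducts.2 ⟨∅, Z.empty_subset, le_rfl, μ, hμ, ?_⟩)
  rw [Finset.sdiff_empty, LinearMap.mulLeft_apply]

lemma exists_prod_mem_derivativeSpan [Fintype J] {n : ℕ}
    (hn : ∀ i, 0 < i → i ≤ n → (i : F) ≠ 0) (hq : ∀ j, (q j).vars.card ≤ s) :
    ∃ Z : Finset J, Z.card ≤ n ∧ ∃ p : ℕ → MvPolynomial σ F,
      (∀ a, p a ∈ fewVars F σ s) ∧ ∏ j, q j ∈ derivativeSpan Z q p n s 0 := by
  classical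
  by_cases hZ : (Finset.univ.filter fun j => constantCoeff (q j) = 0).card ≤ n
  · exact ⟨_, hZ, _, fun a => sum_mem fun j _ => normalizedTail_pow_mem_fewVars (hq j) a,
      prod_mem_derivativeSpan_zero hn q s⟩
  · refine ⟨∅, Nat.zero_le n, 0, fun _ => zero_mem _, Submodule.mem_sup_right ?_⟩
    rw [← Finset.prod_filter_mul_prod_filter_not _ (fun j => constantCoeff (q j) = 0)]
    refine Ideal.mul_mem_right _ _ (Ideal.pow_le_pow_right (not_le.1 hZ) ?_)
    rw [← Finset.prod_const]
    exact Ideal.prod_mem_prod fun j hj =>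
      mem_idealOfVars_of_constantCoeff_eq_zero (Finset.mem_filter.1 hj).2

end Products

section ShiftedDerivatives

open Finset Pointwise

variable {F σ I J : Type*} [Field F] [Fintype σ]

lemma card_multilinearMonomials_le {m k : ℕ} (h : m + k ≤ Fintype.card σ / 2) :
    #(multilinearMonomials F σ m k) ≤ (k + 1) * (Fintype.card σ).choose (m + k) := by
  classical exact card_image_le.trans (card_filter_card_mem_Icc_le h)

lemma prod_X_mul_mem_span_mul_sup_negligibleIdeal [DecidableEq (MvPolynomial σ F)] {Z : Finset J}
    {q : J → MvPolynomial σ F} {p : ℕ → MvPolynomial σ F} {n s k : ℕ} {P : MvPolynomial σ F}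
    (hk : k ≤ n) (hP : P ∈ derivativeSpan Z q p n s k) (S : Finset σ) :
    (∏ v ∈ S, X v) * P ∈
      Submodule.span F (multilinearMonomials F σ #S (k * s) * partialProducts Z q p n k :
        Finset (MvPolynomial σ F)) ⊔ (negligibleIdeal F σ (#S + (n - k))).restrictScalars F := by
  obtain ⟨x, hx, y, hy, rfl⟩ := Submodule.mem_sup.1 hP
  rw [mul_add]
  refine add_mem ?_ (Submodule.mem_sup_right (prod_X_mul_mem_negligibleIdeal hy (by omega)))
  refine Submodule.mul_induction_on hx (fun g hg c hc => ?_) fun a b ha hb => ?_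
  · obtain ⟨a, ha, b, hb, hab⟩ := Submodule.mem_sup.1
      (prod_X_mul_mem_span_sup_negligibleIdeal (S := S) hg (#S + (n - k)))
    rw [← mul_assoc, ← hab, add_mul, Finset.coe_mul, ← Submodule.span_mul_span]
    exact Submodule.add_mem_sup (Submodule.mul_mem_mul ha hc) (Ideal.mul_mem_right _ _ hb)
  · rw [mul_add]
    exact add_mem ha hb

variable [DecidableEq σ]

lemma exists_span_prod_X_mul_monDeriv_prod [Fintype J] {q : J → MvPolynomial σ F} {n s m r : ℕ}
    (hn : ∀ i, 0 < i → i ≤ n → (i : F) ≠ 0) (hr : r ≤ n) (hq : ∀ j, #(q j).vars ≤ s)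
    (hm : m + r * s ≤ Fintype.card σ / 2) :
    ∃ G : Finset (MvPolynomial σ F),
      #G ≤ (r * s + 1) * (Fintype.card σ).choose (m + r * s) *
        ((n + r).choose r * #(partitionsLE n)) ∧
      ∀ γ : σ →₀ ℕ, γ.degree = r → ∀ S : Finset σ, #S = m →
        (∏ v ∈ S, X v) * monDeriv γ (∏ j, q j) ∈
          Submodule.span F G ⊔ (negligibleIdeal F σ (m + (n - r))).restrictScalars F := by
  classical
  obtain ⟨Z, hZ, p, hp, hprod⟩ := exists_prod_mem_derivativeSpan hn hq
  refine ⟨multilinearMonomials F σ m (r * s) * partialProducts Z q p n r,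
    card_mul_le.trans (Nat.mul_le_mul (card_multilinearMonomials_le hm)
      (card_partialProducts_le hZ q p r)), ?_⟩
  rintro γ rfl S rfl
  exact prod_X_mul_mem_span_mul_sup_negligibleIdeal hr (monDeriv_mem (fun k v R hR =>
    pderiv_mem_derivativeSpan (fun j => mem_fewVars_of_card_vars_le (hq j)) hp v hR) γ hprod) S

lemma totalDegree_prod_X_mul_monDeriv_le (S : Finset σ) (γ : σ →₀ ℕ) (P : MvPolynomial σ F) :
    ((∏ v ∈ S, X v) * monDeriv γ P).totalDegree ≤ #S + (P.totalDegree - γ.degree) := by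
  refine (totalDegree_mul _ _).trans (add_le_add ?_ ?_)
  · exact (totalDegree_finsetProd _ _).trans (by simp)
  · refine Finset.sup_le fun e he => ?_
    have := monDeriv_mem_restrictSupport γ P he
    rw [Set.mem_ofPred_eq, Finsupp.degree_apply] at this
    exact Nat.le_sub_of_add_le this

lemma Phi_eq_zero_of_totalDegree_lt {M : Set (σ →₀ ℕ)} {r : ℕ} (hM : ∀ γ ∈ M, γ.degree = r)
    (m : ℕ) {P : MvPolynomial σ F} (hP : P.totalDegree < r) : Phi F M m P = 0 := by
  have hzero : ∀ γ ∈ M, monDeriv γ P = 0 := fun γ hγ => by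
    refine support_eq_empty.1 (eq_empty_of_forall_notMem fun e he => ?_)
    have := monDeriv_mem_restrictSupport γ P he
    rw [Set.mem_ofPred_eq, hM γ hγ] at this
    omega
  rw [Phi, Submodule.span_eq_bot.2 ?_, finrank_bot]
  rintro _ ⟨γ, hγ, S, -, rfl⟩
  rw [hzero γ hγ, mul_zero, mlProj, support_zero, filter_empty, sum_empty]

lemma Phi_sum_prod_le [Fintype I] [Fintype J] {n s m r : ℕ}
    (hn : ∀ i, 0 < i → i ≤ n → (i : F) ≠ 0) (hr : r ≤ n) {M : Set (σ →₀ ℕ)}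
    (hM : ∀ γ ∈ M, γ.degree = r) {α : I → F} {Q : I → J → MvPolynomial σ F}
    (hQ : ∀ i j, #(Q i j).vars ≤ s) (hdeg : (∑ i, C (α i) * ∏ j, Q i j).totalDegree ≤ n)
    (hm : m + r * s ≤ Fintype.card σ / 2) :
    Phi F M m (∑ i, C (α i) * ∏ j, Q i j) ≤
      Fintype.card I * ((r * s + 1) * (Fintype.card σ).choose (m + r * s) *
        ((n + r).choose r * #(partitionsLE n))) := by
  classical
  choose G hG hspan using fun i =>
    exists_span_prod_X_mul_monDeriv_prod hn hr (hQ i) hm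
  set U : Submodule F (MvPolynomial σ F) := Submodule.span F (univ.biUnion G : Finset _)
  have hle : ∀ γ ∈ M, ∀ S : Finset σ, #S = m →
      (∏ v ∈ S, X v) * monDeriv γ (∑ i, C (α i) * ∏ j, Q i j) ∈
        U ⊔ (negligibleIdeal F σ (m + (n - r))).restrictScalars F := by
    intro γ hγ S hS
    rw [monDeriv_sum_C_mul, mul_sum]
    refine sum_mem fun i _ => ?_
    rw [mul_left_comm, C_mul']
    have hGU : Submodule.span F (G i : Set (MvPolynomial σ F)) ≤ U :=
      Submodule.span_mono (coe_subset.2 (subset_biUnion_of_mem G (mem_univ i)))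
    exact Submodule.smul_mem _ _ (sup_le_sup_right hGU _ (hspan i γ (hM γ hγ) S hS))
  calc Phi F M m (∑ i, C (α i) * ∏ j, Q i j) ≤ Module.finrank F U := by
        refine finrank_le_finrank_of_le_sup_of_disjoint (Submodule.span_le.2 ?_)
          ((disjoint_restrictSupport_negligibleIdeal (m + (n - r))).mono_left
            (Submodule.span_le.2 ?_))
        · rintro _ ⟨γ, hγ, S, hS, rfl⟩
          rw [← sub_sub_self (_ * _) (mlProj _)]
          exact sub_mem (hle γ hγ S hS)
            (Submodule.mem_sup_right (sub_mlProj_mem_negligibleIdeal _ _))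
        · rintro _ ⟨γ, hγ, S, rfl, rfl⟩
          refine mlProj_mem_restrictSupport ((totalDegree_prod_X_mul_monDeriv_le S γ _).trans ?_)
          rw [hM γ hγ]
          omega
    _ ≤ #(univ.biUnion G) := finrank_span_finset_le_card _
    _ ≤ _ := card_biUnion_le_card_mul _ _ _ fun i _ => hG i

end ShiftedDerivatives

section Restriction

lemma totalDegree_aeval_le {R σ τ : Type*} [CommSemiring R] {f : σ → MvPolynomial τ R}
    (hf : ∀ v, (f v).totalDegree ≤ 1) (P : MvPolynomial σ R) :
    (aeval f P).totalDegree ≤ P.totalDegree := by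
  rw [aeval_def, eval₂_eq]
  refine totalDegree_finsetSum_le fun e he => ?_
  refine (totalDegree_mul _ _).trans ?_
  rw [algebraMap_eq, totalDegree_C, zero_add]
  refine (totalDegree_finsetProd _ _).trans ?_
  calc ∑ v ∈ e.support, (f v ^ e v).totalDegree ≤ ∑ v ∈ e.support, e v :=
        Finset.sum_le_sum fun v _ => (totalDegree_pow _ _).trans (mul_le_of_le_one_right' (hf v))
    _ ≤ P.totalDegree := le_totalDegree he

variable {F σ : Type*} [Field F] [DecidableEq σ]

lemma totalDegree_restrictPoly_le (V : Finset σ) (P : MvPolynomial σ F) :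
    (restrictPoly V P).totalDegree ≤ P.totalDegree :=
  totalDegree_aeval_le (fun v => by split_ifs <;> simp) P

lemma vars_restrictPoly_subset (V : Finset σ) (P : MvPolynomial σ F) :
    (restrictPoly V P).vars ⊆ P.vars ∩ V := fun v hv => by
  obtain ⟨w, hw, hvw⟩ := mem_vars_bind₁ _ P hv
  split_ifs at hvw with hwV
  · rw [vars_X, Finset.mem_singleton] at hvw
    exact Finset.mem_inter.2 ⟨hvw ▸ hw, hvw ▸ hwV⟩
  · simp at hvw

lemma restrictPoly_sum_prod {I J : Type*} [Fintype I] [Fintype J] (V : Finset σ) (α : I → F)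
    (Q : I → J → MvPolynomial σ F) :
    restrictPoly V (∑ i, C (α i) * ∏ j, Q i j) =
      ∑ i, C (α i) * ∏ j, restrictPoly V (Q i j) := by
  simp [restrictPoly]

end Restriction

section Main

open Finset Real

lemma mul_rpow_add_one_le {n : ℕ} (hn : 0 < n) {x : ℝ} (hx : 1 ≤ x) :
    (x + 1) * 2 ^ (4 * √n) ≤ x * 2 ^ (5 * √n) := by
  have htwo : (2 : ℝ) ≤ 2 ^ √n := by
    simpa using rpow_le_rpow_of_exponent_le one_le_two (one_le_sqrt.2 (Nat.one_le_cast.2 hn))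
  calc (x + 1) * 2 ^ (4 * √n) ≤ x * 2 ^ √n * 2 ^ (4 * √n) := by gcongr; nlinarith
    _ = x * 2 ^ (5 * √n) := by rw [mul_assoc, ← rpow_add two_pos]; ring_nf

variable {F σ I J : Type*} [Field F] [Fintype σ] [DecidableEq σ] [Fintype I] [Fintype J]

lemma Phi_sum_prod_le_mul_two_rpow {n s m r : ℕ} (hn : ∀ i, 0 < i → i ≤ n → (i : F) ≠ 0)
    (hr : 0 < r) (hs : 0 < s) {M : Set (σ →₀ ℕ)} (hM : ∀ γ ∈ M, γ.degree = r) {α : I → F}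
    {Q : I → J → MvPolynomial σ F} (hQ : ∀ i j, #(Q i j).vars ≤ s)
    (hdeg : (∑ i, C (α i) * ∏ j, Q i j).totalDegree ≤ n) (hm : m + r * s ≤ Fintype.card σ / 2) :
    (Phi F M m (∑ i, C (α i) * ∏ j, Q i j) : ℝ) ≤
      Fintype.card I * Fintype.card J ^ 2 * n ^ 3 * (r * s) * 2 ^ (5 * √n) *
        (Fintype.card σ).choose (m + r * s) * (n + r).choose r := by
  obtain hlt | hle := lt_or_ge (∑ i, C (α i) * ∏ j, Q i j).totalDegree r
  · rw [Phi_eq_zero_of_totalDegree_lt hM m hlt, Nat.cast_zero]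
    positivity
  have hJ : Nonempty J := by
    by_contra! hJ
    have hconst : ∑ i, C (α i) * ∏ j, Q i j = C (∑ i, α i) := by simp
    rw [hconst, totalDegree_C] at hle
    omega
  have hn0 : 0 < n := by omega
  have hrs : (1 : ℝ) ≤ r * s := by exact_mod_cast Nat.mul_pos hr hs
  have hone : (1 : ℝ) ≤ Fintype.card J ^ 2 * n ^ 3 := by
    exact_mod_cast Nat.mul_pos (pow_pos Fintype.card_pos 2) (pow_pos hn0 3)
  have hΦ := Nat.cast_le (α := ℝ).2 (Phi_sum_prod_le hn (hle.trans hdeg) hM hQ hdeg hm)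
  push_cast at hΦ
  set A := ((n + r).choose r : ℝ)
  set B := ((Fintype.card σ).choose (m + r * s) : ℝ)
  calc (Phi F M m (∑ i, C (α i) * ∏ j, Q i j) : ℝ)
      ≤ Fintype.card I * ((r * s + 1) * B * (A * #(partitionsLE n))) := hΦ
    _ ≤ Fintype.card I * ((r * s + 1) * B * (A * 2 ^ (4 * √n))) := by
        gcongr
        exact card_partitionsLE_le_two_rpow n
    _ = Fintype.card I * 1 * ((r * s + 1) * 2 ^ (4 * √n)) * B * A := by ring
    _ ≤ Fintype.card I * (Fintype.card J ^ 2 * n ^ 3) * (r * s * 2 ^ (5 * √n)) * B * A := by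
        gcongr ?_ * ?_ * ?_ * B * A
        exact mul_rpow_add_one_le hn0 hrs
    _ = _ := by ring

lemma mul_pow_rpow_mul_rpow_le {N μ δ a : ℝ} {s : ℕ} (hN : 0 < N) (ha : a ≤ N ^ (s * δ / 4)) :
    a * (N ^ μ * N ^ (-μ - δ)) ^ s ≤ N ^ (-(3 / 4 : ℝ) * δ * s) := by
  rw [← rpow_add hN, ← rpow_mul_natCast hN.le]
  calc a * N ^ ((μ + (-μ - δ)) * s) ≤ N ^ (s * δ / 4) * N ^ ((μ + (-μ - δ)) * s) := by gcongr
    _ = N ^ (-(3 / 4 : ℝ) * δ * s) := by rw [← rpow_add hN]; ring_nf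

theorem stmt11_general {n : ℕ} {μ δ : ℝ} {m r s : ℕ} {α : I → F}
    {Q : I → J → MvPolynomial σ F} {P : MvPolynomial σ F} {M : Set (σ →₀ ℕ)}
    (hn : ∀ i, 0 < i → i ≤ n → (i : F) ≠ 0) (hμδ : 0 ≤ μ + δ) (hr : 0 < r) (hs : 0 < s)
    (hdeg : P.totalDegree ≤ n) (hQ : ∀ i j, (#(Q i j).vars : ℝ) ≤ (Fintype.card σ : ℝ) ^ μ)
    (hP : P = ∑ i, C (α i) * ∏ j, Q i j) (hm : ((m + r * s : ℕ) : ℝ) ≤ (Fintype.card σ : ℝ) / 2)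
    (hM : ∀ γ ∈ M, γ.degree = r)
    (hIJ : ((Fintype.card I * Fintype.card J : ℕ) : ℝ) ≤ (Fintype.card σ : ℝ) ^ (s * δ / 4)) :
    1 - (Fintype.card σ : ℝ) ^ (-(3 / 4 : ℝ) * δ * s) ≤
      restrictProb σ ((Fintype.card σ : ℝ) ^ (-μ - δ)) (fun V =>
        (Phi F M m (restrictPoly V P) : ℝ) ≤
          Fintype.card I * Fintype.card J ^ 2 * n ^ 3 * (r * s) * 2 ^ (5 * √n) *
            (Fintype.card σ).choose (m + r * s) * (n + r).choose r) := by
  subst hP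
  have hm' : m + r * s ≤ Fintype.card σ / 2 := by
    simpa only [Nat.floor_div_ofNat, Nat.floor_natCast] using Nat.le_floor hm
  have hN : (1 : ℝ) ≤ Fintype.card σ := by
    have := Nat.mul_pos hr hs
    exact_mod_cast (by omega : 1 ≤ Fintype.card σ)
  have hp₁ := rpow_le_one_of_one_le_of_nonpos hN (by linarith : -μ - δ ≤ 0)
  have hp₀ : (0 : ℝ) ≤ (Fintype.card σ : ℝ) ^ (-μ - δ) := by positivity
  have hprob := one_sub_le_restrictProb_forall_card_inter_lt hp₀ hp₁
    (fun t : I × J => (Q t.1 t.2).vars) (fun t => hQ t.1 t.2) s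
  rw [Fintype.card_prod] at hprob
  refine (sub_le_sub_left (mul_pow_rpow_mul_rpow_le (one_pos.trans_le hN) hIJ) 1).trans
    (hprob.trans (restrictProb_mono hp₀ hp₁ fun V hV => ?_))
  have hdegV := (totalDegree_restrictPoly_le V _).trans hdeg
  rw [restrictPoly_sum_prod] at hdegV ⊢
  exact Phi_sum_prod_le_mul_two_rpow hn hr hs hM (fun i j => (card_le_card
    (vars_restrictPoly_subset V (Q i j))).trans (hV (i, j)).le) hdegV hm'

end Main

/-- Let `0 ≤ μ < 1`, `δ = (1-μ)/2`, `p = N^{-μ-δ}`. Let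
`P ∈ F[X_1,…,X_N]` have degree `n` with `P = ∑_{i=1}^T α_i ∏_{j=1}^d Q_{ij}`, each `Q_{ij}`
depending on at most `N^μ` variables. Let `m, r, s` be positive with `m + r·s ≤ N/2` and
let `M` consist of multilinear monomials of degree exactly `r`. If `T·d ≤ N^{sδ/4}`, then
for an absolute constant `c`, with probability at least `1 - N^{-(3/4)δs}` over `V ← D_p`,
`Φ_{M,m}(P|_V) ≤ T·d²·n³·r·s·2^{c√n}·binom(N, m+rs)·binom(n+r, r)`. -/
theorem stmt11 :
    ∃ c : ℝ, ∀ (F : Type*) [Field F] [CharZero F], ∀ N n T d : ℕ, ∀ μ : ℝ,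
      0 ≤ μ → μ < 1 →
      ∀ (α : Fin T → F) (Q : Fin T → Fin d → MvPolynomial (Fin N) F)
        (P : MvPolynomial (Fin N) F) (m r s : ℕ) (M : Set (Fin N →₀ ℕ)),
      0 < m → 0 < r → 0 < s →
      P.totalDegree = n →
      (∀ i j, ((Q i j).vars.card : ℝ) ≤ (N : ℝ) ^ μ) →
      P = ∑ i, C (α i) * ∏ j, Q i j →
      ((m + r * s : ℕ) : ℝ) ≤ (N : ℝ) / 2 →
      (∀ γ ∈ M, (∀ v, γ v ≤ 1) ∧ ∑ v, γ v = r) →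
      ((T * d : ℕ) : ℝ) ≤ (N : ℝ) ^ ((s : ℝ) * ((1 - μ) / 2) / 4) →
      1 - (N : ℝ) ^ (-(3 / 4 : ℝ) * ((1 - μ) / 2) * s) ≤
        restrictProb (Fin N) ((N : ℝ) ^ (-μ - (1 - μ) / 2)) (fun V =>
          (Phi F M m (restrictPoly V P) : ℝ) ≤
            (T : ℝ) * d ^ 2 * n ^ 3 * (r * s) * (2 : ℝ) ^ (c * Real.sqrt n) *
              N.choose (m + r * s) * (n + r).choose r) := by
  refine ⟨5, fun F _ _ N n T d μ hμ₀ _ α Q P m r s M _ hr hs hdeg hQ hP hm hM hTd => ?_⟩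
  simpa only [Fintype.card_fin] using stmt11_general (δ := (1 - μ) / 2)
    (fun i hi _ => Nat.cast_ne_zero.2 hi.ne') (by linarith) hr hs hdeg.le (by simpa using hQ) hP
    (by simpa using hm) (fun γ hγ => (Finsupp.degree_eq_sum γ).trans (hM γ hγ).2)
    (by simpa using hTd)
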